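/- arXiv:2307.07672 — 2 statements merged into one kernel-verified Lean document; each statement's English description precedes it below -/
import Mathlib

section
/- Let Ω = {ℓ, h} be a binary state space, p = p(ℓ) ∈ (0,1) the prior, n = 2 receivers, and let v^ℓ, v^h : [0,1]^2 → ℝ be bounded and upper semicontinuous (beliefs identified with the probability of state ℓ). Then the value Val of the persuasion problem equals the infimum of p·V^ℓ + (1−p)·V^h over real numbers V^ℓ, V^h and continuous functions α_1, α_2 : [0,1] → ℝ satisfying, for all x_1, x_2 ∈ [0,1]: v^ℓ(x_1,x_2) ≤ V^ℓ + (1−x_1)·α_1(x_1) + (1−x_2)·α_2(x_2) and v^h(x_1,x_2) ≤ V^h − x_1·α_1(x_1) − x_2·α_2(x_2). -/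
open MeasureTheory

noncomputable section

/-- In the binary-state case a belief is identified with the probability of state `ℓ`,
a number in `[0,1]`. -/
abbrev BeliefI : Type := Set.Icc (0 : ℝ) 1

/-- States: `true` is the low state `ℓ`, `false` is the high state `h`. -/
abbrev StateL : Bool := true
abbrev StateH : Bool := false

/-- The joint distribution of the state and the two receivers' beliefs, for prior
`p = p(ℓ)` and conditional belief distributions `μl` (given `ℓ`) and `μh` (given `h`). -/
def jointPBin (p : ℝ) (μl μh : Measure (Fin 2 → BeliefI)) :
    Measure (Bool × (Fin 2 → BeliefI)) :=
  ENNReal.ofReal p • ((Measure.dirac StateL).prod μl) +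
    ENNReal.ofReal (1 - p) • ((Measure.dirac StateH).prod μh)

/-- Feasibility of a pair of conditional belief distributions in the two-receiver
binary-state problem: conditionally on the information `σ(x_i)` of each receiver `i`,
the conditional probability of the state `ℓ` is `x_i` and of the state `h` is `1 - x_i`. -/
def FeasibleBin (p : ℝ) (μl μh : Measure (Fin 2 → BeliefI)) : Prop :=
  IsProbabilityMeasure μl ∧ IsProbabilityMeasure μh ∧
  ∀ i : Fin 2,
    ((fun z : Bool × (Fin 2 → BeliefI) => (z.2 i).1)
      =ᵐ[jointPBin p μl μh]
      (jointPBin p μl μh)[Set.indicator {z : Bool × (Fin 2 → BeliefI) | z.1 = StateL}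
          (fun _ => (1 : ℝ)) |
        MeasurableSpace.comap (fun z : Bool × (Fin 2 → BeliefI) => z.2 i) inferInstance]) ∧
    ((fun z : Bool × (Fin 2 → BeliefI) => 1 - (z.2 i).1)
      =ᵐ[jointPBin p μl μh]
      (jointPBin p μl μh)[Set.indicator {z : Bool × (Fin 2 → BeliefI) | z.1 = StateH}
          (fun _ => (1 : ℝ)) |
        MeasurableSpace.comap (fun z : Bool × (Fin 2 → BeliefI) => z.2 i) inferInstance])

/-- the value of the binary-state two-receiver persuasion problem -/
def ValBin (p : ℝ) (vl vh : (Fin 2 → BeliefI) → ℝ) : ℝ :=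
  sSup { r : ℝ | ∃ μl μh : Measure (Fin 2 → BeliefI), FeasibleBin p μl μh ∧
    r = p * ∫ x, vl x ∂μl + (1 - p) * ∫ x, vh x ∂μh }

end

open Filter Topology CompactlySupported

theorem aux_hb {E : Type*} [AddCommGroup E] [Module ℝ E] (N : E → ℝ)
    (N_hom : ∀ c : ℝ, 0 < c → ∀ x, N (c • x) = c * N x)
    (N_add : ∀ x y, N (x + y) ≤ N x + N y) (v : E) :
    ∃ L : E →ₗ[ℝ] ℝ, L v = N v ∧ ∀ x, L x ≤ N x := by
  have N0 : N 0 = 0 := by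
    have := N_hom 2 (by norm_num) 0
    rw [smul_zero] at this
    linarith
  have H : ∀ c : ℝ, c • v = 0 → (RingHom.id ℝ) c • N v = 0 := by
    intro c hc
    rcases smul_eq_zero.mp hc with h | h
    · simp [h]
    · simp [h, N0]
  obtain ⟨g, hg1, hg2⟩ := exists_extension_of_le_sublinear
    (LinearPMap.mkSpanSingleton' (σ := RingHom.id ℝ) v (N v) H) N N_hom N_add (by
      rintro ⟨x, hx⟩
      obtain ⟨t, rfl⟩ := Submodule.mem_span_singleton.mp hx
      rw [LinearPMap.mkSpanSingleton'_apply]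
      simp only [RingHom.id_apply, smul_eq_mul]
      rcases lt_trichotomy t 0 with h | h | h
      · have h1 := N_add (t • v) ((-t) • v)
        rw [← add_smul, add_neg_cancel, zero_smul, N0, N_hom (-t) (by linarith)] at h1
        linarith
      · subst h
        simp [N0]
      · exact (N_hom t h v).ge)
  refine ⟨g, ?_, hg2⟩
  have := hg1 ⟨v, Submodule.mem_span_singleton_self v⟩
  exact this.trans (LinearPMap.mkSpanSingleton'_apply_self v (N v) H _)

theorem aux_riesz {X : Type*} [TopologicalSpace X] [T2Space X] [CompactSpace X]
    [MeasurableSpace X] [BorelSpace X] (Λ : C(X, ℝ) →ₗ[ℝ] ℝ)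
    (hΛ : ∀ f : C(X, ℝ), (∀ x, 0 ≤ f x) → 0 ≤ Λ f) :
    ∃ m : Measure X, IsFiniteMeasure m ∧ ∀ f : C(X, ℝ), ∫ x, f x ∂m = Λ f := by
  let Λ' : C_c(X, ℝ) →ₗ[ℝ] ℝ :=
    { toFun := fun f => Λ f.toContinuousMap
      map_add' := fun f g => by
        rw [← map_add]; rfl
      map_smul' := fun c f => by
        rw [← map_smul]; rfl }
  let Λp : C_c(X, ℝ) →ₚ[ℝ] ℝ := PositiveLinearMap.mk₀ Λ' (fun f hf => hΛ _ (fun x => hf x))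
  refine ⟨RealRMK.rieszMeasure Λp, inferInstance, fun f => ?_⟩
  have := RealRMK.integral_rieszMeasure Λp
    ⟨f, HasCompactSupport.of_compactSpace f⟩
  exact this

theorem aux_usc {X : Type*} [PseudoMetricSpace X] [MeasurableSpace X] [BorelSpace X]
    [Nonempty X]
    (m : Measure X) [IsFiniteMeasure m] (v : X → ℝ) (hv : UpperSemicontinuous v) (C : ℝ)
    (hC : ∀ x, |v x| ≤ C) (c : ℝ)
    (hc : ∀ g : X → ℝ, Continuous g → (∀ x, v x ≤ g x) → c ≤ ∫ x, g x ∂m) :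
    c ≤ ∫ x, v x ∂m := by
  have hb : ∀ (k : ℕ) (x : X), BddAbove (Set.range fun y => v y - k * dist x y) := by
    intro k x
    refine ⟨C, ?_⟩
    rintro _ ⟨y, rfl⟩
    have := (abs_le.mp (hC y)).2
    have : 0 ≤ (k : ℝ) * dist x y := by positivity
    simp only
    linarith
  let g : ℕ → X → ℝ := fun k x => ⨆ y, (v y - k * dist x y)
  have hvg : ∀ k x, v x ≤ g k x := by
    intro k x
    have := le_ciSup (hb k x) x
    simpa using this
  have hgC : ∀ k x, g k x ≤ C := by
    intro k x
    refine ciSup_le fun y => ?_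
    have := (abs_le.mp (hC y)).2
    have : 0 ≤ (k : ℝ) * dist x y := by positivity
    linarith
  have hgc : ∀ k, Continuous (g k) := by
    intro k
    have : LipschitzWith (k : NNReal) (g k) := by
      refine LipschitzWith.of_le_add_mul _ fun x x' => ?_
      refine ciSup_le fun y => ?_
      have h1 := le_ciSup (hb k x') y
      have h2 : dist x' y ≤ dist x x' + dist x y := by
        rw [dist_comm x x']; exact dist_triangle _ _ _
      have h3 : (k : ℝ) * dist x' y ≤ k * (dist x x' + dist x y) := by gcongr
      simp only [NNReal.coe_natCast]
      change _ ≤ g k x' + _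
      change _ ≤ g k x' at h1
      linarith
    exact this.continuous
  have hlim : Tendsto (fun k => ∫ x, g k x ∂m) atTop (𝓝 (∫ x, v x ∂m)) := by
    refine tendsto_integral_of_dominated_convergence (fun _ => C)
      (fun k => (hgc k).measurable.aestronglyMeasurable) (integrable_const _)
      (fun k => Eventually.of_forall fun x => ?_) (Eventually.of_forall fun x => ?_)
    · rw [Real.norm_eq_abs, abs_le]
      exact ⟨(abs_le.mp (hC x)).1.trans (hvg k x), hgC k x⟩
    · rw [Metric.tendsto_atTop]
      intro ε hε
      have h1 := hv x (v x + ε / 2) (by linarith)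
      obtain ⟨δ, hδ, h2⟩ := Metric.eventually_nhds_iff.mp h1
      obtain ⟨K, hK⟩ := exists_nat_gt (2 * C / δ)
      refine ⟨K, fun k hk => ?_⟩
      have hkK : (K : ℝ) ≤ k := by exact_mod_cast hk
      have h3 : g k x ≤ v x + ε / 2 := by
        refine ciSup_le fun y => ?_
        by_cases hy : dist y x < δ
        · have := h2 hy
          have : 0 ≤ (k : ℝ) * dist x y := by positivity
          linarith
        · push Not at hy
          rw [dist_comm] at hy
          have h4 : 2 * C < k * δ := by
            rw [div_lt_iff₀ hδ] at hK
            nlinarith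
          have h5 : (k : ℝ) * δ ≤ k * dist x y := by gcongr
          have := (abs_le.mp (hC y)).2
          have := (abs_le.mp (hC x)).1
          linarith
      rw [Real.dist_eq, abs_lt]
      constructor
      · linarith [hvg k x]
      · linarith
  exact ge_of_tendsto' hlim fun k => hc _ (hgc k) (hvg k)

theorem aux_integrable {X : Type*} [MeasurableSpace X] (m : Measure X) [IsFiniteMeasure m]
    (v : X → ℝ) (hv : Measurable v) (C : ℝ) (hC : ∀ x, |v x| ≤ C) : Integrable v m :=
  Integrable.of_bound hv.aestronglyMeasurable C (Eventually.of_forall hC)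

theorem aux_joint (p : ℝ) (hp0 : 0 < p) (hp1 : p < 1) (μl μh : Measure (Fin 2 → BeliefI))
    [IsProbabilityMeasure μl] [IsProbabilityMeasure μh]
    (f : Bool × (Fin 2 → BeliefI) → ℝ) (hf : Measurable f) (C : ℝ) (hC : ∀ x, |f x| ≤ C) :
    ∫ z, f z ∂(jointPBin p μl μh) =
      p * ∫ x, f (true, x) ∂μl + (1 - p) * ∫ x, f (false, x) ∂μh := by
  unfold jointPBin
  rw [integral_add_measure, integral_smul_measure, integral_smul_measure,
    Measure.dirac_prod, Measure.dirac_prod, integral_map, integral_map]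
  · rw [ENNReal.toReal_ofReal hp0.le, ENNReal.toReal_ofReal (by linarith)]
    rfl
  · fun_prop
  · exact hf.aestronglyMeasurable
  · fun_prop
  · exact hf.aestronglyMeasurable
  · exact (aux_integrable _ f hf C hC).smul_measure (by simp)
  · exact (aux_integrable _ f hf C hC).smul_measure (by simp)

theorem aux_joint_prob (p : ℝ) (μl μh : Measure (Fin 2 → BeliefI))
    [IsProbabilityMeasure μl] [IsProbabilityMeasure μh] :
    IsFiniteMeasure (jointPBin p μl μh) := by
  constructor
  unfold jointPBin
  simp

theorem aux_comap_le (i : Fin 2) :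
    MeasurableSpace.comap (fun z : Bool × (Fin 2 → BeliefI) => z.2 i) inferInstance ≤
      (inferInstance : MeasurableSpace (Bool × (Fin 2 → BeliefI))) := by
  apply Measurable.comap_le
  fun_prop

/-- the moment conditions equivalent to feasibility -/
def AuxMoment (p : ℝ) (μl μh : Measure (Fin 2 → BeliefI)) : Prop :=
  ∀ (i : Fin 2) (φ : BeliefI → ℝ), Continuous φ →
    p * ∫ x, (1 - (x i).1) * φ (x i) ∂μl = (1 - p) * ∫ x, (x i).1 * φ (x i) ∂μh

theorem aux_cont_bdd {X : Type*} [TopologicalSpace X] [CompactSpace X] (f : X → ℝ)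
    (hf : Continuous f) : ∃ C, ∀ x, |f x| ≤ C := by
  obtain ⟨C, hC⟩ := (isCompact_range hf).isBounded.exists_norm_le
  exact ⟨C, fun x => hC _ ⟨x, rfl⟩⟩

theorem aux_feas_moment (p : ℝ) (hp0 : 0 < p) (hp1 : p < 1)
    (μl μh : Measure (Fin 2 → BeliefI)) (h : FeasibleBin p μl μh) : AuxMoment p μl μh := by
  obtain ⟨h1, h2, h3⟩ := h
  intro i φ hφ
  obtain ⟨C, hC⟩ := aux_cont_bdd φ hφ
  have hC0 : 0 ≤ C := (abs_nonneg _).trans (hC 0)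
  have hfin := aux_joint_prob p μl μh
  have hA : MeasurableSet {z : Bool × (Fin 2 → BeliefI) | z.1 = StateL} :=
    measurable_fst (measurableSet_singleton _)
  have hφm : Measurable φ := hφ.measurable
  have hind : Measurable (Set.indicator {z : Bool × (Fin 2 → BeliefI) | z.1 = StateL}
      (fun _ => (1 : ℝ))) := measurable_const.indicator hA
  have hindb : ∀ z, |Set.indicator {z : Bool × (Fin 2 → BeliefI) | z.1 = StateL}
      (fun _ => (1 : ℝ)) z| ≤ 1 := by
    intro z
    by_cases hz : z.1 = StateL <;> simp [Set.indicator, hz]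
  have hφz : Measurable (fun z : Bool × (Fin 2 → BeliefI) => φ (z.2 i)) := by fun_prop
  have hxb : ∀ z : BeliefI, |z.1| ≤ 1 := fun z => abs_le.mpr ⟨by linarith [z.2.1], z.2.2⟩
  have hfm : StronglyMeasurable[MeasurableSpace.comap
      (fun z : Bool × (Fin 2 → BeliefI) => z.2 i) inferInstance]
      (fun z : Bool × (Fin 2 → BeliefI) => φ (z.2 i)) := by
    apply Measurable.stronglyMeasurable
    exact hφm.comp (comap_measurable _)
  have hb : ∀ z, |((fun z : Bool × (Fin 2 → BeliefI) => φ (z.2 i)) *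
      Set.indicator {z : Bool × (Fin 2 → BeliefI) | z.1 = StateL} (fun _ => (1 : ℝ))) z| ≤ C := by
    intro z
    rw [Pi.mul_apply, abs_mul]
    calc _ ≤ C * 1 := mul_le_mul (hC _) (hindb z) (abs_nonneg _) hC0
      _ = C := mul_one C
  have key := condExp_mul_of_stronglyMeasurable_left (μ := jointPBin p μl μh) hfm
    (aux_integrable _ _ (hφz.mul hind) C hb)
    (aux_integrable _ _ hind 1 hindb)
  have e1 : ∫ z, φ (z.2 i) * (z.2 i).1 ∂(jointPBin p μl μh) =
      ∫ z, ((fun z : Bool × (Fin 2 → BeliefI) => φ (z.2 i)) *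
      Set.indicator {z : Bool × (Fin 2 → BeliefI) | z.1 = StateL} (fun _ => (1 : ℝ))) z
      ∂(jointPBin p μl μh) := by
    refine Eq.trans ?_ (integral_condExp (aux_comap_le i))
    apply integral_congr_ae
    filter_upwards [key, (h3 i).1] with z hz1 hz2
    rw [hz1, Pi.mul_apply, ← hz2]
  rw [aux_joint p hp0 hp1 _ _ _ (hφz.mul hind) C hb,
    aux_joint p hp0 hp1 _ _ _ (by fun_prop) C (fun z => by
      rw [abs_mul]
      calc _ ≤ C * 1 := mul_le_mul (hC _) (hxb _) (abs_nonneg _) hC0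
        _ = C := mul_one C)] at e1
  simp only [Pi.mul_apply, Set.indicator, Set.mem_ofPred_eq, if_true, mul_one,
    Bool.false_eq_true, if_false, mul_zero, integral_zero, add_zero] at e1
  have i1 : Integrable (fun x : Fin 2 → BeliefI => φ (x i)) μl :=
    aux_integrable _ _ (by fun_prop) C (fun x => hC _)
  have i2 : Integrable (fun x : Fin 2 → BeliefI => φ (x i) * (x i).1) μl :=
    aux_integrable _ _ (by fun_prop) C (fun z => by
      rw [abs_mul]
      calc _ ≤ C * 1 := mul_le_mul (hC _) (hxb _) (abs_nonneg _) hC0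
        _ = C := mul_one C)
  have e2 : ∫ x, (1 - (x i).1) * φ (x i) ∂μl =
      ∫ x, φ (x i) ∂μl - ∫ x, φ (x i) * (x i).1 ∂μl := by
    rw [← integral_sub i1 i2]
    congr 1; ext x; ring
  have e3 : ∫ x, (x i).1 * φ (x i) ∂μh = ∫ x, φ (x i) * (x i).1 ∂μh := by
    congr 1; ext x; ring
  rw [e2, e3]
  linarith

theorem aux_moment_meas (p : ℝ) (hp0 : 0 < p) (hp1 : p < 1)
    (μl μh : Measure (Fin 2 → BeliefI)) [IsProbabilityMeasure μl] [IsProbabilityMeasure μh]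
    (h : AuxMoment p μl μh) (i : Fin 2) (φ : BeliefI → ℝ) (hφ : Measurable φ) :
    p * ∫ x, (1 - (x i).1) * φ (x i) ∂μl = (1 - p) * ∫ x, (x i).1 * φ (x i) ∂μh := by
  have gen : ∀ (q : ℝ) (μ : Measure (Fin 2 → BeliefI)) [IsProbabilityMeasure μ]
      (w : BeliefI → ℝ), 0 ≤ q → Measurable w → (∀ x, 0 ≤ w x) → (∀ x, w x ≤ 1) →
      ∃ ν : Measure BeliefI, IsFiniteMeasure ν ∧ ∀ ψ : BeliefI → ℝ, Measurable ψ →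
        ∫ y, ψ y ∂ν = q * ∫ x, w (x i) * ψ (x i) ∂μ := by
    intro q μ _ w hq hw hw0 hw1
    have hwm : Measurable fun x : Fin 2 → BeliefI => ENNReal.ofReal (w (x i)) := by fun_prop
    have : IsFiniteMeasure (μ.withDensity fun x => ENNReal.ofReal (w (x i))) := by
      apply isFiniteMeasure_withDensity_ofReal
      exact (aux_integrable μ (fun x => w (x i)) (by fun_prop) 1 (fun x =>
        abs_le.mpr ⟨by linarith [hw0 (x i)], hw1 _⟩)).2
    refine ⟨ENNReal.ofReal q • (μ.withDensity fun x => ENNReal.ofReal (w (x i))).map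
      (fun x => x i), ?_, ?_⟩
    · exact Measure.smul_finite _ (by simp)
    · intro ψ hψ
      rw [integral_smul_measure, integral_map (measurable_pi_apply i).aemeasurable hψ.aestronglyMeasurable,
        integral_withDensity_eq_integral_toReal_smul hwm (by simp), ENNReal.toReal_ofReal hq]
      simp only [smul_eq_mul, ENNReal.toReal_ofReal (hw0 _)]
  obtain ⟨ν1, f1, e1⟩ := gen p μl (fun x => 1 - x.1) hp0.le (by fun_prop)
    (fun x => by linarith [x.2.2]) (fun x => by linarith [x.2.1])
  obtain ⟨ν2, f2, e2⟩ := gen (1 - p) μh (fun x => x.1) (by linarith) (by fun_prop)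
    (fun x => x.2.1) (fun x => x.2.2)
  have : ν1 = ν2 := by
    apply ext_of_forall_integral_eq_of_IsFiniteMeasure
    intro f
    rw [e1 _ f.continuous.measurable, e2 _ f.continuous.measurable]
    exact h i f f.continuous
  rw [← e1 φ hφ, ← e2 φ hφ, this]

theorem aux_moment_feas (p : ℝ) (hp0 : 0 < p) (hp1 : p < 1)
    (μl μh : Measure (Fin 2 → BeliefI)) (h1 : IsProbabilityMeasure μl)
    (h2 : IsProbabilityMeasure μh) (h : AuxMoment p μl μh) : FeasibleBin p μl μh := by
  have hfin := aux_joint_prob p μl μh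
  -- general reduction
  have red : ∀ (i : Fin 2) (b : Bool) (w : BeliefI → ℝ), Measurable w →
      (∀ x, 0 ≤ w x) → (∀ x, w x ≤ 1) →
      (∀ φ : BeliefI → ℝ, Measurable φ → (∀ x, |φ x| ≤ 1) →
        p * ∫ x, φ (x i) * w (x i) ∂μl + (1 - p) * ∫ x, φ (x i) * w (x i) ∂μh =
        p * ∫ x, φ (x i) * (if b = true then 1 else 0) ∂μl +
        (1 - p) * ∫ x, φ (x i) * (if b = false then 1 else 0) ∂μh) →
      (fun z : Bool × (Fin 2 → BeliefI) => w (z.2 i))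
      =ᵐ[jointPBin p μl μh]
      (jointPBin p μl μh)[Set.indicator {z : Bool × (Fin 2 → BeliefI) | z.1 = b}
          (fun _ => (1 : ℝ)) |
        MeasurableSpace.comap (fun z : Bool × (Fin 2 → BeliefI) => z.2 i) inferInstance] := by
    intro i b w hw hw0 hw1 hφ
    have hA : MeasurableSet {z : Bool × (Fin 2 → BeliefI) | z.1 = b} :=
      measurable_fst (measurableSet_singleton _)
    have hind : Measurable (Set.indicator {z : Bool × (Fin 2 → BeliefI) | z.1 = b}
        (fun _ => (1 : ℝ))) := measurable_const.indicator hA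
    have hindb : ∀ z, |Set.indicator {z : Bool × (Fin 2 → BeliefI) | z.1 = b}
        (fun _ => (1 : ℝ)) z| ≤ 1 := by
      intro z
      by_cases hz : z.1 = b <;> simp [Set.indicator, hz]
    have hwm : Measurable (fun z : Bool × (Fin 2 → BeliefI) => w (z.2 i)) := by fun_prop
    have hwb : ∀ x, |w x| ≤ 1 := fun x => abs_le.mpr ⟨by linarith [hw0 x], hw1 x⟩
    refine ae_eq_condExp_of_forall_setIntegral_eq (aux_comap_le i)
      (aux_integrable _ _ hind 1 hindb)
      (fun s _ _ => (aux_integrable _ _ hwm 1 (fun z => hwb _)).integrableOn) ?_ ?_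
    · rintro s ⟨B, hB, rfl⟩ -
      have hs : MeasurableSet ((fun z : Bool × (Fin 2 → BeliefI) => z.2 i) ⁻¹' B) :=
        aux_comap_le i _ ⟨B, hB, rfl⟩
      rw [← integral_indicator hs, ← integral_indicator hs]
      rw [aux_joint p hp0 hp1 _ _ _ (hwm.indicator hs) 1 (fun z => by
        unfold Set.indicator; split_ifs
        · exact hwb _
        · simp),
        aux_joint p hp0 hp1 _ _ _ (hind.indicator hs) 1 (fun z => by
        rw [Set.indicator]; split_ifs
        · exact hindb _
        · simp)]
      have := hφ (B.indicator fun _ => 1) (measurable_const.indicator hB) (fun x => by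
        unfold Set.indicator; split_ifs <;> simp)
      have k1 : ∀ (t : Bool) (x : Fin 2 → BeliefI),
          ((fun z : Bool × (Fin 2 → BeliefI) => z.2 i) ⁻¹' B).indicator
            (fun z => w (z.2 i)) (t, x) = (B.indicator fun _ => (1 : ℝ)) (x i) * w (x i) := by
        intro t x
        by_cases hx : x i ∈ B
        · rw [Set.indicator_of_mem (show (t, x) ∈ _ from hx), Set.indicator_of_mem hx, one_mul]
        · rw [Set.indicator_of_notMem (show (t, x) ∉ _ from hx), Set.indicator_of_notMem hx,
            zero_mul]
      have k2 : ∀ (t : Bool) (x : Fin 2 → BeliefI),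
          ((fun z : Bool × (Fin 2 → BeliefI) => z.2 i) ⁻¹' B).indicator
            (Set.indicator {z : Bool × (Fin 2 → BeliefI) | z.1 = b} (fun _ => (1 : ℝ))) (t, x) =
            (B.indicator fun _ => (1 : ℝ)) (x i) * (if b = t then 1 else 0) := by
        intro t x
        have k3 : Set.indicator {z : Bool × (Fin 2 → BeliefI) | z.1 = b} (fun _ => (1 : ℝ)) (t, x)
            = if b = t then 1 else 0 := by
          by_cases ht : b = t
          · rw [Set.indicator_of_mem (show (t, x) ∈ _ from ht.symm), if_pos ht]
          · rw [Set.indicator_of_notMem (show (t, x) ∉ _ from fun h => ht (Eq.symm h)), if_neg ht]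
        by_cases hx : x i ∈ B
        · rw [Set.indicator_of_mem (show (t, x) ∈ _ from hx), Set.indicator_of_mem hx, one_mul, k3]
        · rw [Set.indicator_of_notMem (show (t, x) ∉ _ from hx), Set.indicator_of_notMem hx,
            zero_mul]
      simp only [k1, k2]
      exact this
    · apply StronglyMeasurable.aestronglyMeasurable
      apply Measurable.stronglyMeasurable
      exact hw.comp (comap_measurable _)
  have hxb : ∀ z : BeliefI, |z.1| ≤ 1 := fun z => abs_le.mpr ⟨by linarith [z.2.1], z.2.2⟩
  have bd : ∀ (i : Fin 2) (μ : Measure (Fin 2 → BeliefI)) [IsProbabilityMeasure μ]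
      (φ : BeliefI → ℝ), Measurable φ → (∀ x, |φ x| ≤ 1) →
      ∫ x, φ (x i) * (1 - (x i).1) ∂μ = ∫ x, φ (x i) ∂μ - ∫ x, φ (x i) * (x i).1 ∂μ := by
    intro i μ _ φ hφ hb
    have i1 : Integrable (fun x : Fin 2 → BeliefI => φ (x i)) μ :=
      aux_integrable _ _ (by fun_prop) 1 (fun x => hb _)
    have i2 : Integrable (fun x : Fin 2 → BeliefI => φ (x i) * (x i).1) μ :=
      aux_integrable _ _ (by fun_prop) 1 (fun z => by
        rw [abs_mul]
        exact mul_le_one₀ (hb _) (abs_nonneg _) (hxb _))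
    rw [← integral_sub i1 i2]
    congr 1; ext x; ring
  refine ⟨h1, h2, fun i => ⟨?_, ?_⟩⟩
  · refine red i StateL (fun x => x.1) (by fun_prop) (fun x => x.2.1) (fun x => x.2.2) ?_
    intro φ hφ hb
    have e := aux_moment_meas p hp0 hp1 μl μh h i φ hφ
    simp only [mul_comm _ (φ _)] at e
    rw [bd i μl φ hφ hb] at e
    simp only [StateL, if_true, mul_one, Bool.true_eq_false, if_false, mul_zero,
      integral_zero, add_zero]
    linarith
  · refine red i StateH (fun x => 1 - x.1) (by fun_prop) (fun x => by linarith [x.2.2])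
      (fun x => by linarith [x.2.1]) ?_
    intro φ hφ hb
    have e := aux_moment_meas p hp0 hp1 μl μh h i φ hφ
    simp only [mul_comm _ (φ _)] at e
    rw [bd i μl φ hφ hb] at e
    rw [bd i μl φ hφ hb, bd i μh φ hφ hb]
    simp only [StateH, if_true, mul_one, Bool.false_eq_true, if_false, mul_zero,
      integral_zero, zero_add]
    linarith

/-- the set of dual values -/
def AuxDual (p : ℝ) (vl vh : (Fin 2 → BeliefI) → ℝ) : Set ℝ :=
  { r : ℝ | ∃ (Vl Vh : ℝ) (α : Fin 2 → BeliefI → ℝ),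
        (∀ i : Fin 2, Continuous (α i)) ∧
        (∀ x : Fin 2 → BeliefI,
          vl x ≤ Vl + (1 - (x 0).1) * α 0 (x 0) + (1 - (x 1).1) * α 1 (x 1)) ∧
        (∀ x : Fin 2 → BeliefI,
          vh x ≤ Vh - (x 0).1 * α 0 (x 0) - (x 1).1 * α 1 (x 1)) ∧
        r = p * Vl + (1 - p) * Vh }

/-- bounded functions -/
def AuxB : Submodule ℝ ((Fin 2 → BeliefI) → ℝ) where
  carrier := {f | ∃ C : ℝ, ∀ x, |f x| ≤ C}
  add_mem' := by
    rintro f g ⟨C, hC⟩ ⟨D, hD⟩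
    exact ⟨C + D, fun x => (abs_add_le _ _).trans (add_le_add (hC x) (hD x))⟩
  zero_mem' := ⟨0, fun x => by simp⟩
  smul_mem' := by
    rintro c f ⟨C, hC⟩
    refine ⟨|c| * C, fun x => ?_⟩
    rw [Pi.smul_apply, smul_eq_mul, abs_mul]
    exact mul_le_mul_of_nonneg_left (hC x) (abs_nonneg c)

theorem aux_dual_nonneg (p : ℝ) (vl vh : (Fin 2 → BeliefI) → ℝ)
    (h1 : ∀ x, vl x ≤ 0) (h2 : ∀ x, vh x ≤ 0) : (0 : ℝ) ∈ AuxDual p vl vh :=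
  ⟨0, 0, fun _ _ => 0, fun _ => continuous_const, by simpa using h1, by simpa using h2, by simp⟩

theorem aux_dual_lb (p : ℝ) (hp0 : 0 < p) (hp1 : p < 1) (vl vh : (Fin 2 → BeliefI) → ℝ)
    (r : ℝ) (hr : r ∈ AuxDual p vl vh) :
    p * vl (fun _ => ⟨p, hp0.le, hp1.le⟩) + (1 - p) * vh (fun _ => ⟨p, hp0.le, hp1.le⟩) ≤ r := by
  obtain ⟨Vl, Vh, α, -, h1, h2, rfl⟩ := hr
  have a := mul_le_mul_of_nonneg_left (h1 (fun _ => ⟨p, hp0.le, hp1.le⟩)) hp0.le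
  have b := mul_le_mul_of_nonneg_left (h2 (fun _ => ⟨p, hp0.le, hp1.le⟩))
    (show (0 : ℝ) ≤ 1 - p by linarith)
  simp only at a b
  linarith

theorem aux_dual_bdd (p : ℝ) (hp0 : 0 < p) (hp1 : p < 1) (vl vh : (Fin 2 → BeliefI) → ℝ) :
    BddBelow (AuxDual p vl vh) := ⟨_, fun r hr => aux_dual_lb p hp0 hp1 vl vh r hr⟩

theorem aux_dual_ne (p : ℝ) (f g : AuxB) : (AuxDual p f.1 g.1).Nonempty := by
  obtain ⟨C, hC⟩ := f.2
  obtain ⟨D, hD⟩ := g.2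
  exact ⟨_, C, D, fun _ _ => 0, fun _ => continuous_const,
    fun x => by simpa using (abs_le.mp (hC x)).2, fun x => by simpa using (abs_le.mp (hD x)).2, rfl⟩

theorem aux_dual_smul (p : ℝ) (f g : (Fin 2 → BeliefI) → ℝ) (c : ℝ) (hc : 0 < c) (r : ℝ)
    (hr : r ∈ AuxDual p f g) : c * r ∈ AuxDual p (c • f) (c • g) := by
  obtain ⟨Vl, Vh, α, h0, h1, h2, rfl⟩ := hr
  refine ⟨c * Vl, c * Vh, fun i x => c * α i x, fun i => (h0 i).const_mul c, fun x => ?_,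
    fun x => ?_, by ring⟩
  · have := mul_le_mul_of_nonneg_left (h1 x) hc.le
    simp only [Pi.smul_apply, smul_eq_mul]
    linarith
  · have := mul_le_mul_of_nonneg_left (h2 x) hc.le
    simp only [Pi.smul_apply, smul_eq_mul]
    linarith

theorem aux_dual_add (p : ℝ) (f g f' g' : (Fin 2 → BeliefI) → ℝ) (r r' : ℝ)
    (hr : r ∈ AuxDual p f g) (hr' : r' ∈ AuxDual p f' g') :
    r + r' ∈ AuxDual p (f + f') (g + g') := by
  obtain ⟨Vl, Vh, α, h0, h1, h2, rfl⟩ := hr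
  obtain ⟨Vl', Vh', α', h0', h1', h2', rfl⟩ := hr'
  refine ⟨Vl + Vl', Vh + Vh', fun i x => α i x + α' i x, fun i => (h0 i).add (h0' i), fun x => ?_,
    fun x => ?_, by ring⟩
  · simp only [Pi.add_apply]
    linarith [h1 x, h1' x]
  · simp only [Pi.add_apply]
    linarith [h2 x, h2' x]

theorem aux_functional (p : ℝ) (hp0 : 0 < p) (hp1 : p < 1) (v : AuxB × AuxB) :
    ∃ L : AuxB × AuxB →ₗ[ℝ] ℝ, L v = sInf (AuxDual p v.1.1 v.2.1) ∧
      ∀ f : AuxB × AuxB, ∀ r ∈ AuxDual p f.1.1 f.2.1, L f ≤ r := by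
  have hle : ∀ (c : ℝ), 0 < c → ∀ x : AuxB × AuxB,
      sInf (AuxDual p (c • x).1.1 (c • x).2.1) ≤ c * sInf (AuxDual p x.1.1 x.2.1) := by
    intro c hc x
    rw [← div_le_iff₀' hc]
    refine le_csInf (aux_dual_ne p _ _) fun r hr => ?_
    rw [div_le_iff₀' hc]
    exact csInf_le (aux_dual_bdd p hp0 hp1 _ _) (aux_dual_smul p _ _ c hc r hr)
  obtain ⟨L, h1, h2⟩ := aux_hb (fun f : AuxB × AuxB => sInf (AuxDual p f.1.1 f.2.1))
    (fun c hc x => by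
      refine le_antisymm (hle c hc x) ?_
      have := hle c⁻¹ (inv_pos.mpr hc) (c • x)
      rw [inv_smul_smul₀ hc.ne', ← div_eq_inv_mul, le_div_iff₀' hc] at this
      exact this)
    (fun x y => by
      rw [← sub_le_iff_le_add]
      refine le_csInf (aux_dual_ne p _ _) fun r hr => ?_
      rw [sub_le_iff_le_add', ← sub_le_iff_le_add]
      refine le_csInf (aux_dual_ne p _ _) fun r' hr' => ?_
      rw [sub_le_iff_le_add, add_comm r' r]
      exact csInf_le (aux_dual_bdd p hp0 hp1 _ _) (aux_dual_add p _ _ _ _ r r' hr hr')) v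
  exact ⟨L, h1, fun f r hr => (h2 f).trans (csInf_le (aux_dual_bdd p hp0 hp1 _ _) hr)⟩

/-- continuous functions are bounded -/
def auxC : C(Fin 2 → BeliefI, ℝ) →ₗ[ℝ] AuxB where
  toFun f := ⟨f, aux_cont_bdd f f.continuous⟩
  map_add' _ _ := rfl
  map_smul' _ _ := rfl

theorem aux_weak (p : ℝ) (hp0 : 0 < p) (hp1 : p < 1)
    (vl vh : (Fin 2 → BeliefI) → ℝ) (C : ℝ) (hC : ∀ x, |vl x| ≤ C ∧ |vh x| ≤ C)
    (hvl : Measurable vl) (hvh : Measurable vh)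
    (μl μh : Measure (Fin 2 → BeliefI)) (h : FeasibleBin p μl μh) (r : ℝ)
    (hr : r ∈ AuxDual p vl vh) :
    p * ∫ x, vl x ∂μl + (1 - p) * ∫ x, vh x ∂μh ≤ r := by
  have hm := aux_feas_moment p hp0 hp1 μl μh h
  obtain ⟨i1, i2, -⟩ := h
  obtain ⟨Vl, Vh, α, h0, h1, h2, rfl⟩ := hr
  have ci : ∀ (μ : Measure (Fin 2 → BeliefI)) [IsProbabilityMeasure μ]
      (f : (Fin 2 → BeliefI) → ℝ), Continuous f → Integrable f μ := by
    intro μ _ f hf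
    obtain ⟨D, hD⟩ := aux_cont_bdd f hf
    exact aux_integrable _ _ hf.measurable D hD
  have c0 := h0 0
  have c1 := h0 1
  have l0 : Integrable (fun x : Fin 2 → BeliefI => (1 - (x 0).1) * α 0 (x 0)) μl :=
    ci _ _ (by fun_prop)
  have l1 : Integrable (fun x : Fin 2 → BeliefI => (1 - (x 1).1) * α 1 (x 1)) μl :=
    ci _ _ (by fun_prop)
  have r0 : Integrable (fun x : Fin 2 → BeliefI => (x 0).1 * α 0 (x 0)) μh :=
    ci _ _ (by fun_prop)
  have r1 : Integrable (fun x : Fin 2 → BeliefI => (x 1).1 * α 1 (x 1)) μh :=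
    ci _ _ (by fun_prop)
  have a : ∫ x, vl x ∂μl ≤ Vl + ∫ x, (1 - (x 0).1) * α 0 (x 0) ∂μl +
      ∫ x, (1 - (x 1).1) * α 1 (x 1) ∂μl := by
    have e := integral_mono (aux_integrable μl vl hvl C fun x => (hC x).1)
      (((integrable_const Vl).add l0).add l1) h1
    refine e.trans (le_of_eq ?_)
    rw [integral_add' ((integrable_const Vl).add l0) l1, integral_add' (integrable_const Vl) l0]
    simp
  have b : ∫ x, vh x ∂μh ≤ Vh - ∫ x, (x 0).1 * α 0 (x 0) ∂μh -
      ∫ x, (x 1).1 * α 1 (x 1) ∂μh := by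
    have e := integral_mono (aux_integrable μh vh hvh C fun x => (hC x).2)
      (((integrable_const Vh).sub r0).sub r1) h2
    refine e.trans (le_of_eq ?_)
    rw [integral_sub' ((integrable_const Vh).sub r0) r1, integral_sub' (integrable_const Vh) r0]
    simp
  have m0 := hm 0 (α 0) c0
  have m1 := hm 1 (α 1) c1
  have a' := mul_le_mul_of_nonneg_left a hp0.le
  have b' := mul_le_mul_of_nonneg_left b (show (0 : ℝ) ≤ 1 - p by linarith)
  linarith

theorem aux_strong (p : ℝ) (hp0 : 0 < p) (hp1 : p < 1)
    (vl vh : (Fin 2 → BeliefI) → ℝ) (C : ℝ) (hC : ∀ x, |vl x| ≤ C ∧ |vh x| ≤ C)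
    (hvl : UpperSemicontinuous vl) (hvh : UpperSemicontinuous vh) :
    ∃ μl μh : Measure (Fin 2 → BeliefI), FeasibleBin p μl μh ∧
      sInf (AuxDual p vl vh) ≤ p * ∫ x, vl x ∂μl + (1 - p) * ∫ x, vh x ∂μh := by
  have hq : 0 < 1 - p := by linarith
  let bl : AuxB := ⟨vl, C, fun x => (hC x).1⟩
  let bh : AuxB := ⟨vh, C, fun x => (hC x).2⟩
  obtain ⟨L, hL, hLr⟩ := aux_functional p hp0 hp1 (bl, bh)
  -- a general construction for each state
  have gen : ∀ (q : ℝ), 0 < q → ∀ (T : AuxB →ₗ[ℝ] ℝ),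
      (∀ f : AuxB, (∀ x, f.1 x ≤ 0) → T f ≤ 0) →
      (T (auxC (ContinuousMap.const _ 1)) = q) →
      ∃ μ : Measure (Fin 2 → BeliefI), IsProbabilityMeasure μ ∧
        (∀ f : C(Fin 2 → BeliefI, ℝ), q * ∫ x, f x ∂μ = T (auxC f)) ∧
        (∀ w : AuxB, UpperSemicontinuous w.1 → T w ≤ q * ∫ x, w.1 x ∂μ) := by
    intro q hq T hT hT1
    obtain ⟨m, hm, hmf⟩ := aux_riesz (T ∘ₗ auxC) (fun f hf => by
      have := hT (-(auxC f)) (fun x => neg_nonpos.mpr (hf x))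
      rw [map_neg] at this
      simpa using this)
    have hint : ∀ f : (Fin 2 → BeliefI) → ℝ,
        q * ∫ x, f x ∂(ENNReal.ofReal q⁻¹ • m) = ∫ x, f x ∂m := by
      intro f
      rw [integral_smul_measure, ENNReal.toReal_ofReal (inv_pos.mpr hq).le, smul_eq_mul,
        mul_inv_cancel_left₀ hq.ne']
    have hmu : m.real Set.univ = q := by
      have := hmf (ContinuousMap.const _ 1)
      rw [LinearMap.comp_apply, hT1] at this
      simpa using this
    refine ⟨ENNReal.ofReal q⁻¹ • m, ⟨?_⟩, ?_, ?_⟩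
    · rw [Measure.smul_apply, smul_eq_mul, ← ENNReal.ofReal_toReal (measure_ne_top m Set.univ),
        ← ENNReal.ofReal_mul (inv_pos.mpr hq).le]
      change ENNReal.ofReal (q⁻¹ * m.real Set.univ) = 1
      rw [hmu, inv_mul_cancel₀ hq.ne', ENNReal.ofReal_one]
    · intro f
      rw [hint]
      exact hmf f
    · intro w hw
      rw [hint]
      obtain ⟨D, hD⟩ := w.2
      refine aux_usc m w.1 hw D hD _ fun g hg hwg => ?_
      have e := hmf ⟨g, hg⟩
      change ∫ x, g x ∂m = T (auxC ⟨g, hg⟩) at e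
      rw [e]
      have := hT (w - auxC ⟨g, hg⟩) (fun x => sub_nonpos.mpr (hwg x))
      rw [map_sub] at this
      linarith
  have hneg : ∀ f r, r ∈ AuxDual p (-f).1.1 (-f).2.1 → -r ≤ L f := by
    intro f r hr
    have := hLr _ _ hr
    rw [map_neg] at this
    linarith
  obtain ⟨μl, il, fl, ul⟩ := gen p hp0 (L ∘ₗ LinearMap.inl ℝ AuxB AuxB)
    (fun f hf => hLr (f, 0) 0 (aux_dual_nonneg p _ _ hf (fun x => le_refl _)))
    (by
      apply le_antisymm
      · refine hLr (auxC (ContinuousMap.const _ 1), 0) p ⟨1, 0, fun _ _ => 0,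
          fun _ => continuous_const, fun x => ?_, fun x => ?_, by ring⟩
        · simp [auxC]
        · simp
      · rw [← neg_neg p]
        refine hneg (auxC (ContinuousMap.const _ 1), 0) (-p) ⟨-1, 0, fun _ _ => 0,
          fun _ => continuous_const, fun x => ?_, fun x => ?_, by ring⟩
        · simp [auxC]
        · simp)
  obtain ⟨μh, ih, fh, uh⟩ := gen (1 - p) hq (L ∘ₗ LinearMap.inr ℝ AuxB AuxB)
    (fun f hf => hLr (0, f) 0 (aux_dual_nonneg p _ _ (fun x => le_refl _) hf))
    (by
      apply le_antisymm
      · refine hLr (0, auxC (ContinuousMap.const _ 1)) (1 - p) ⟨0, 1, fun _ _ => 0,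
          fun _ => continuous_const, fun x => ?_, fun x => ?_, by ring⟩
        · simp
        · simp [auxC]
      · rw [← neg_neg (1 - p)]
        refine hneg (0, auxC (ContinuousMap.const _ 1)) (-(1 - p)) ⟨0, -1, fun _ _ => 0,
          fun _ => continuous_const, fun x => ?_, fun x => ?_, by ring⟩
        · simp
        · simp [auxC])
  have split : ∀ f g : AuxB, L (f, g) =
      (L ∘ₗ LinearMap.inl ℝ AuxB AuxB) f + (L ∘ₗ LinearMap.inr ℝ AuxB AuxB) g := by
    intro f g
    simp only [LinearMap.comp_apply, LinearMap.inl_apply, LinearMap.inr_apply]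
    rw [← map_add]
    simp
  refine ⟨μl, μh, aux_moment_feas p hp0 hp1 μl μh il ih ?_, ?_⟩
  · -- one-sided inequality
    have one : ∀ (i : Fin 2) (φ : BeliefI → ℝ), Continuous φ →
        p * ∫ x, (1 - (x i).1) * φ (x i) ∂μl - (1 - p) * ∫ x, (x i).1 * φ (x i) ∂μh ≤ 0 := by
      intro i φ hφ
      have e1 := fl ⟨fun x => (1 - (x i).1) * φ (x i), by fun_prop⟩
      have e2 := fh ⟨fun x => (x i).1 * φ (x i), by fun_prop⟩
      simp only [ContinuousMap.coe_mk] at e1 e2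
      rw [e1, e2, sub_eq_add_neg, ← map_neg, ← split]
      refine hLr _ 0 ⟨0, 0, fun j y => if j = i then φ y else 0, fun j => ?_, fun x => ?_,
        fun x => ?_, by ring⟩
      · by_cases hj : j = i <;> simp [hj, hφ, continuous_const]
      · fin_cases i <;> simp [auxC]
      · fin_cases i <;> simp [auxC]
    intro i φ hφ
    have a := one i φ hφ
    have b := one i (fun x => -φ x) hφ.neg
    simp only [mul_neg, integral_neg] at b
    linarith
  · rw [show sInf (AuxDual p vl vh) = L (bl, bh) from hL.symm, split]
    exact add_le_add (ul bl hvl) (uh bh hvh)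

/-- the simplified dual in the binary-state two-receiver case
(equation `eq:dual_value_2_receivers_simplified`). -/
theorem binary_dual_value
    (p : ℝ) (hp0 : 0 < p) (hp1 : p < 1)
    (vl vh : (Fin 2 → BeliefI) → ℝ)
    (hvb : ∃ C : ℝ, ∀ x, |vl x| ≤ C ∧ |vh x| ≤ C)
    (hvlusc : UpperSemicontinuous vl) (hvhusc : UpperSemicontinuous vh) :
    ValBin p vl vh =
      sInf { r : ℝ | ∃ (Vl Vh : ℝ) (α : Fin 2 → BeliefI → ℝ),
        (∀ i : Fin 2, Continuous (α i)) ∧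
        (∀ x : Fin 2 → BeliefI,
          vl x ≤ Vl + (1 - (x 0).1) * α 0 (x 0) + (1 - (x 1).1) * α 1 (x 1)) ∧
        (∀ x : Fin 2 → BeliefI,
          vh x ≤ Vh - (x 0).1 * α 0 (x 0) - (x 1).1 * α 1 (x 1)) ∧
        r = p * Vl + (1 - p) * Vh } := by
  obtain ⟨C, hC⟩ := hvb
  change ValBin p vl vh = sInf (AuxDual p vl vh)
  obtain ⟨μl, μh, hf, hle⟩ := aux_strong p hp0 hp1 vl vh C hC hvlusc hvhusc
  have hweak := aux_weak p hp0 hp1 vl vh C hC hvlusc.measurable hvhusc.measurable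
  have hne : (AuxDual p vl vh).Nonempty :=
    aux_dual_ne p ⟨vl, C, fun x => (hC x).1⟩ ⟨vh, C, fun x => (hC x).2⟩
  have hub : ∀ s ∈ { r : ℝ | ∃ μl μh : Measure (Fin 2 → BeliefI), FeasibleBin p μl μh ∧
      r = p * ∫ x, vl x ∂μl + (1 - p) * ∫ x, vh x ∂μh }, s ≤ sInf (AuxDual p vl vh) := by
    rintro s ⟨a, b, hab, rfl⟩
    exact le_csInf hne fun r hr => hweak a b hab r hr
  unfold ValBin
  apply le_antisymm
  · exact csSup_le ⟨_, μl, μh, hf, rfl⟩ hub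
  · exact hle.trans (le_csSup ⟨_, hub⟩ ⟨μl, μh, hf, rfl⟩)
end

section
/- Let Ω = {ℓ, h} be a binary state space with prior p = 1/2 and n = 2 receivers (beliefs identified with the probability of state ℓ), and let β ∈ (0, 2]. For every feasible collection (μ^ℓ, μ^h) of conditional belief distributions for prior 1/2, the unconditional distribution μ = (1/2)·μ^ℓ + (1/2)·μ^h satisfies ∫_{[0,1]^2} |x_1 − x_2|^β dμ(x_1,x_2) ≤ 2^{−β}; moreover this bound is tight: equality holds for the feasible collection induced by revealing the state to receiver 2 and giving no information to receiver 1, namely μ^ℓ = δ_{(1/2,1)} and μ^h = δ_{(1/2,0)}. -/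
open MeasureTheory

lemma integrable_of_cont {α : Type*} [MeasurableSpace α] (μ : Measure α) [IsFiniteMeasure μ]
    (f : α → ℝ) (hf : Measurable f) (C : ℝ) (hC : ∀ x, |f x| ≤ C) : Integrable f μ :=
  Integrable.of_bound hf.aestronglyMeasurable C (Filter.Eventually.of_forall hC)

lemma meas_coord (i : Fin 2) : Measurable (fun x : Fin 2 → BeliefI => (x i).1) :=
  measurable_subtype_coe.comp (measurable_pi_apply i)

instance jointP_prob (μl μh : Measure (Fin 2 → BeliefI)) [IsProbabilityMeasure μl]
    [IsProbabilityMeasure μh] : IsProbabilityMeasure (jointPBin (1 / 2) μl μh) := by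
  constructor
  simp only [jointPBin, Measure.coe_add, Measure.coe_smul, Pi.add_apply, Pi.smul_apply,
    measure_univ, smul_eq_mul, mul_one]
  rw [← ENNReal.ofReal_add (by norm_num) (by norm_num)]
  norm_num

lemma integral_joint (μl μh : Measure (Fin 2 → BeliefI)) [IsProbabilityMeasure μl]
    [IsProbabilityMeasure μh] (f : Bool × (Fin 2 → BeliefI) → ℝ) (hf : Measurable f) (C : ℝ)
    (hC : ∀ x, |f x| ≤ C) :
    ∫ z, f z ∂(jointPBin (1 / 2) μl μh) =
      (1 / 2) * ∫ x, f (true, x) ∂μl + (1 / 2) * ∫ x, f (false, x) ∂μh := by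
  rw [jointPBin, integral_add_measure, integral_smul_measure, integral_smul_measure,
    Measure.dirac_prod, Measure.dirac_prod,
    integral_map (by fun_prop) hf.aestronglyMeasurable,
    integral_map (by fun_prop) hf.aestronglyMeasurable]
  · norm_num
  · exact (integrable_of_cont _ f hf C hC).smul_measure ENNReal.ofReal_ne_top
  · exact (integrable_of_cont _ f hf C hC).smul_measure ENNReal.ofReal_ne_top

lemma moments (μl μh : Measure (Fin 2 → BeliefI)) (h : FeasibleBin (1 / 2) μl μh) (i : Fin 2) :
    (∫ x, (x i).1 ∂μl + ∫ x, (x i).1 ∂μh = 1) ∧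
    (∫ x, (x i).1 ^ 2 ∂μl + ∫ x, (x i).1 ^ 2 ∂μh = ∫ x, (x i).1 ∂μl) := by
  obtain ⟨h1, h2, h3⟩ := h
  have hL := (h3 i).1
  set P := jointPBin (1 / 2) μl μh with hP
  set L : Bool × (Fin 2 → BeliefI) → ℝ :=
    Set.indicator {z : Bool × (Fin 2 → BeliefI) | z.1 = StateL} (fun _ => (1 : ℝ)) with hLdef
  have hm : MeasurableSpace.comap (fun z : Bool × (Fin 2 → BeliefI) => z.2 i) inferInstance
      ≤ (inferInstance : MeasurableSpace (Bool × (Fin 2 → BeliefI))) := by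
    apply Measurable.comap_le
    fun_prop
  have hLm : Measurable L := by
    apply measurable_const.indicator
    exact measurable_fst (measurableSet_singleton StateL)
  have hLb : ∀ z, |L z| ≤ 1 := by
    intro z
    by_cases hz : z.1 = StateL <;> simp [hLdef, Set.indicator, hz]
  have hxm : Measurable (fun z : Bool × (Fin 2 → BeliefI) => (z.2 i).1) :=
    (meas_coord i).comp measurable_snd
  have hxb : ∀ z : Bool × (Fin 2 → BeliefI), |(z.2 i).1| ≤ 1 := by
    intro z
    rw [abs_of_nonneg (z.2 i).2.1]; exact (z.2 i).2.2
  have hxLb : ∀ z : Bool × (Fin 2 → BeliefI), |(z.2 i).1 * L z| ≤ 1 := by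
    intro z
    rw [abs_mul]; exact mul_le_one₀ (hxb z) (abs_nonneg _) (hLb z)
  have hxxb : ∀ z : Bool × (Fin 2 → BeliefI), |(z.2 i).1 * (z.2 i).1| ≤ 1 := by
    intro z
    rw [abs_mul]; exact mul_le_one₀ (hxb z) (abs_nonneg _) (hxb z)
  have e1 : ∫ z, (z.2 i).1 ∂P = ∫ z, L z ∂P := by
    rw [integral_congr_ae hL, integral_condExp hm]
  have hsm : StronglyMeasurable[MeasurableSpace.comap
      (fun z : Bool × (Fin 2 → BeliefI) => z.2 i) inferInstance]
      (fun z : Bool × (Fin 2 → BeliefI) => (z.2 i).1) := by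
    apply Measurable.stronglyMeasurable
    exact measurable_subtype_coe.comp (comap_measurable _)
  have e2 : ∫ z, (z.2 i).1 * L z ∂P = ∫ z, (z.2 i).1 * (z.2 i).1 ∂P := by
    rw [← integral_condExp hm]
    apply integral_congr_ae
    have := condExp_mul_of_stronglyMeasurable_left (μ := P) hsm
      (integrable_of_cont P _ (hxm.mul hLm) 1 hxLb) (integrable_of_cont P L hLm 1 hLb)
    filter_upwards [this, hL] with z hz hz2
    rw [hz2] 
    rw [← hz2]
    refine hz.trans ?_
    simp only [Pi.mul_apply]
    rw [← hz2]
  rw [hP, integral_joint μl μh _ hxm 1 hxb, integral_joint μl μh _ hLm 1 hLb] at e1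
  have j1 := integral_joint μl μh (fun z => (z.2 i).1 * L z) (hxm.mul hLm) 1 hxLb
  have j2 := integral_joint μl μh (fun z => (z.2 i).1 * (z.2 i).1) (hxm.mul hxm) 1 hxxb
  rw [hP, j1, j2] at e2
  simp [hLdef, Set.indicator] at e1 e2
  simp only [sq]
  constructor <;> linarith

lemma second_moment (μl μh : Measure (Fin 2 → BeliefI)) (h : FeasibleBin (1 / 2) μl μh) :
    ∫ x, ((x 0).1 - (x 1).1) ^ 2 ∂μl + ∫ x, ((x 0).1 - (x 1).1) ^ 2 ∂μh ≤ 1 / 2 := by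
  obtain ⟨a0, b0⟩ := moments μl μh h 0
  obtain ⟨a1, b1⟩ := moments μl μh h 1
  obtain ⟨h1, h2, -⟩ := h
  have I1 : ∀ (μ : Measure (Fin 2 → BeliefI)) [IsProbabilityMeasure μ] (i : Fin 2),
      Integrable (fun x : Fin 2 → BeliefI => (x i).1) μ := by
    intro μ _ i
    apply integrable_of_cont _ _ (meas_coord i) 1
    intro z
    rw [abs_of_nonneg (z i).2.1]; exact (z i).2.2
  have I2 : ∀ (μ : Measure (Fin 2 → BeliefI)) [IsProbabilityMeasure μ] (i : Fin 2),
      Integrable (fun x : Fin 2 → BeliefI => (x i).1 ^ 2) μ := by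
    intro μ _ i
    apply integrable_of_cont _ _ ((meas_coord i).pow_const 2) 1
    intro z
    rw [abs_of_nonneg (by positivity)]; exact pow_le_one₀ (z i).2.1 (z i).2.2
  have key : ∀ (c : ℝ) (μ : Measure (Fin 2 → BeliefI)) [IsProbabilityMeasure μ],
      ∫ x, ((x 0).1 - (x 1).1) ^ 2 ∂μ ≤
        2 * (∫ x, (x 0).1 ^ 2 ∂μ) + 2 * (∫ x, (x 1).1 ^ 2 ∂μ)
        - 4 * c * (∫ x, (x 0).1 ∂μ) - 4 * c * (∫ x, (x 1).1 ∂μ) + 4 * c ^ 2 := by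
    intro c μ _
    have A := ((((I2 μ 0).const_mul 2).add ((I2 μ 1).const_mul 2)).sub
      ((I1 μ 0).const_mul (4 * c))).sub ((I1 μ 1).const_mul (4 * c))
    have B := A.add (integrable_const (4 * c ^ 2))
    have E : ∫ x, (2 * (x 0).1 ^ 2 + 2 * (x 1).1 ^ 2 - 4 * c * (x 0).1 - 4 * c * (x 1).1
        + 4 * c ^ 2) ∂μ = 2 * (∫ x, (x 0).1 ^ 2 ∂μ) + 2 * (∫ x, (x 1).1 ^ 2 ∂μ)
        - 4 * c * (∫ x, (x 0).1 ∂μ) - 4 * c * (∫ x, (x 1).1 ∂μ) + 4 * c ^ 2 := by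
      have A1 := (I2 μ 0).const_mul 2
      have A2 := (I2 μ 1).const_mul 2
      have A3 := (I1 μ 0).const_mul (4 * c)
      have A4 := (I1 μ 1).const_mul (4 * c)
      rw [integral_add, integral_sub, integral_sub, integral_add]
      · simp only [integral_const_mul, integral_const, probReal_univ, one_smul]
      all_goals first
        | exact A
        | exact A1
        | exact A2
        | exact A3
        | exact A4
        | exact A1.add A2
        | exact (A1.add A2).sub A3
        | exact integrable_const _
    rw [← E]
    apply integral_mono_of_nonneg (Filter.Eventually.of_forall fun x => sq_nonneg _) B
    refine Filter.Eventually.of_forall fun x => ?_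
    have := sq_nonneg ((x 0).1 + (x 1).1 - 2 * c)
    simp only [Pi.add_apply, Pi.sub_apply]
    nlinarith
  have k1 := key (3 / 4) μl
  have k2 := key (1 / 4) μh
  linarith

lemma pointwise (β : ℝ) (hβ0 : 0 < β) (hβ2 : β ≤ 2) (t : ℝ) :
    |t| ^ β ≤ 2 ^ (-β) * (1 - β / 2) + 2 ^ (-β) * (2 * β) * t ^ 2 := by
  have hb := rpow_one_add_le_one_add_mul_self (s := 4 * t ^ 2 - 1)
    (by nlinarith [sq_nonneg t]) (p := β / 2) (by linarith) (by linarith)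
  have e : (1 + (4 * t ^ 2 - 1)) ^ (β / 2) = (2 : ℝ) ^ β * |t| ^ β := by
    rw [← Real.mul_rpow (by norm_num) (abs_nonneg t)]
    have : (1 + (4 * t ^ 2 - 1)) = (2 * |t|) ^ (2 : ℝ) := by
      rw [Real.rpow_two, mul_pow, sq_abs]; ring
    rw [this, ← Real.rpow_mul (by positivity)]
    congr 1; ring
  rw [e] at hb
  have h2 : (2 : ℝ) ^ (-β) * 2 ^ β = 1 := by
    rw [← Real.rpow_add (by norm_num)]; simp
  have hp : (0 : ℝ) < 2 ^ (-β) := by positivity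
  have := mul_le_mul_of_nonneg_left hb hp.le
  rw [← mul_assoc, h2] at this
  nlinarith

lemma upper (β : ℝ) (hβ0 : 0 < β) (hβ2 : β ≤ 2) (μl μh : Measure (Fin 2 → BeliefI))
    (h : FeasibleBin (1 / 2) μl μh) :
      (∫ x, |(x 0).1 - (x 1).1| ^ β
          ∂(ENNReal.ofReal (1 / 2) • μl + ENNReal.ofReal (1 / 2) • μh))
        ≤ 2 ^ (-β) := by
  have hs := second_moment μl μh h
  obtain ⟨h1, h2, -⟩ := h
  have hd : Measurable (fun x : Fin 2 → BeliefI => (x 0).1 - (x 1).1) :=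
    (meas_coord 0).sub (meas_coord 1)
  have hdb : ∀ x : Fin 2 → BeliefI, |(x 0).1 - (x 1).1| ≤ 1 := by
    intro x
    rw [abs_le]
    constructor <;> linarith [(x 0).2.1, (x 0).2.2, (x 1).2.1, (x 1).2.2]
  have I : ∀ (μ : Measure (Fin 2 → BeliefI)) [IsFiniteMeasure μ],
      Integrable (fun x : Fin 2 → BeliefI => |(x 0).1 - (x 1).1| ^ β) μ := by
    intro μ _
    refine integrable_of_cont _ _ (by fun_prop) 1 ?_
    intro x
    rw [abs_of_nonneg (by positivity)]
    exact Real.rpow_le_one (abs_nonneg _) (hdb x) hβ0.le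
  have J : ∀ (μ : Measure (Fin 2 → BeliefI)) [IsFiniteMeasure μ],
      Integrable (fun x : Fin 2 → BeliefI => ((x 0).1 - (x 1).1) ^ 2) μ := by
    intro μ _
    refine integrable_of_cont _ _ (by fun_prop) 1 ?_
    intro x
    rw [abs_pow]
    exact pow_le_one₀ (abs_nonneg _) (hdb x)
  have key : ∀ (μ : Measure (Fin 2 → BeliefI)) [IsProbabilityMeasure μ],
      ∫ x, |(x 0).1 - (x 1).1| ^ β ∂μ ≤ 2 ^ (-β) * (1 - β / 2) +
        2 ^ (-β) * (2 * β) * ∫ x, ((x 0).1 - (x 1).1) ^ 2 ∂μ := by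
    intro μ _
    have := integral_mono (I μ)
      ((integrable_const (2 ^ (-β) * (1 - β / 2))).add ((J μ).const_mul (2 ^ (-β) * (2 * β))))
      (fun x => pointwise β hβ0 hβ2 ((x 0).1 - (x 1).1))
    simp only [Pi.add_apply] at this
    rwa [integral_add (integrable_const _) ((J μ).const_mul _),
      integral_const, probReal_univ, one_smul, integral_const_mul] at this
  rw [integral_add_measure ((I μl).smul_measure ENNReal.ofReal_ne_top)
    ((I μh).smul_measure ENNReal.ofReal_ne_top), integral_smul_measure, integral_smul_measure,
    ENNReal.toReal_ofReal (by norm_num), smul_eq_mul, smul_eq_mul]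
  have k1 := key μl
  have k2 := key μh
  have hp : (0 : ℝ) < 2 ^ (-β) * (2 * β) := by positivity
  have := mul_le_mul_of_nonneg_left hs hp.le
  nlinarith

lemma feas_aux (a b : Fin 2 → BeliefI) (i : Fin 2)
    (hab : (a i = b i ∧ (a i).1 = 1 / 2) ∨ ((a i).1 = 1 ∧ (b i).1 = 0))
    (f g : Bool × (Fin 2 → BeliefI) → ℝ) (hf : Measurable f) (C : ℝ) (hC : ∀ x, |f x| ≤ C)
    (φ : ℝ → ℝ) (hφ : Measurable φ) (hg : g = fun z => φ (z.2 i).1) (hgC : ∀ x, |g x| ≤ C)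
    (hval : (f (true, a) = φ 1 ∧ f (false, b) = φ 0) ∧ φ 1 + φ 0 = 2 * φ (1 / 2)) :
    g =ᵐ[jointPBin (1 / 2) (Measure.dirac a) (Measure.dirac b)]
      (jointPBin (1 / 2) (Measure.dirac a) (Measure.dirac b))[f |
        MeasurableSpace.comap (fun z : Bool × (Fin 2 → BeliefI) => z.2 i) inferInstance] := by
  have hm : MeasurableSpace.comap (fun z : Bool × (Fin 2 → BeliefI) => z.2 i) inferInstance
      ≤ (inferInstance : MeasurableSpace (Bool × (Fin 2 → BeliefI))) := by
    apply Measurable.comap_le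
    fun_prop
  have hsm : StronglyMeasurable[MeasurableSpace.comap
      (fun z : Bool × (Fin 2 → BeliefI) => z.2 i) inferInstance] g := by
    apply Measurable.stronglyMeasurable
    rw [hg]
    exact hφ.comp (measurable_subtype_coe.comp (comap_measurable _))
  have hgm : Measurable g := hsm.measurable.mono hm le_rfl
  have hC0 : 0 ≤ C := (abs_nonneg _).trans (hC (true, a))
  refine ae_eq_condExp_of_forall_setIntegral_eq hm (integrable_of_cont _ f hf C hC) ?_ ?_
    hsm.aestronglyMeasurable
  · intro s _ _
    exact (integrable_of_cont _ g hgm C hgC).integrableOn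
  · intro s hs _
    have hs' := hm s hs
    have bd : ∀ k : Bool × (Fin 2 → BeliefI) → ℝ, (∀ x, |k x| ≤ C) →
        ∀ x, |s.indicator k x| ≤ C := by
      intro k hk x
      by_cases hx : x ∈ s <;> simp [hx, hk x, hC0]
    rw [← integral_indicator hs', ← integral_indicator hs',
      integral_joint _ _ _ (hgm.indicator hs') C (bd g hgC),
      integral_joint _ _ _ (hf.indicator hs') C (bd f hC)]
    simp only [integral_dirac]
    obtain ⟨t, ht, rfl⟩ := hs
    obtain ⟨⟨v1, v2⟩, v3⟩ := hval
    simp only [Set.indicator, Set.mem_preimage, v1, v2, hg]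
    rcases hab with ⟨e, e'⟩ | ⟨e, e'⟩
    · rw [← e, e']
      by_cases ht' : a i ∈ t
      · have hb' : b i ∈ t := e ▸ ht'
        have q1 : (true, a) ∈ (fun z : Bool × (Fin 2 → BeliefI) => z.2 i) ⁻¹' t := ht'
        have q2 : (false, b) ∈ (fun z : Bool × (Fin 2 → BeliefI) => z.2 i) ⁻¹' t := hb'
        rw [if_pos q1, if_pos q2, if_pos q1, if_pos q2]
        linarith
      · have hb' : b i ∉ t := e ▸ ht'
        have q1 : (true, a) ∉ (fun z : Bool × (Fin 2 → BeliefI) => z.2 i) ⁻¹' t := ht'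
        have q2 : (false, b) ∉ (fun z : Bool × (Fin 2 → BeliefI) => z.2 i) ⁻¹' t := hb'
        rw [if_neg q1, if_neg q2, if_neg q1, if_neg q2]
    · rw [e, e']

lemma feas (a b : Fin 2 → BeliefI)
    (hab : ∀ i, (a i = b i ∧ (a i).1 = 1 / 2) ∨ ((a i).1 = 1 ∧ (b i).1 = 0)) :
    FeasibleBin (1 / 2) (Measure.dirac a) (Measure.dirac b) := by
  refine ⟨inferInstance, inferInstance, fun i => ⟨?_, ?_⟩⟩
  · refine feas_aux a b i (hab i) _ _ ?_ 1 ?_ id measurable_id rfl ?_ ?_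
    · exact measurable_const.indicator (measurable_fst (measurableSet_singleton StateL))
    · intro z
      by_cases hz : z.1 = StateL <;> simp [Set.indicator, hz]
    · intro z
      rw [abs_of_nonneg (z.2 i).2.1]; exact (z.2 i).2.2
    · norm_num [Set.indicator]
  · refine feas_aux a b i (hab i) _ _ ?_ 1 ?_ (fun t => 1 - t) (by fun_prop) rfl ?_ ?_
    · exact measurable_const.indicator (measurable_fst (measurableSet_singleton StateH))
    · intro z
      by_cases hz : z.1 = StateH <;> simp [Set.indicator, hz]
    · intro z
      rw [abs_of_nonneg (by linarith [(z.2 i).2.2])]; linarith [(z.2 i).2.1]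
    · norm_num [Set.indicator]

/-- the maximal `β`-polarization `E|x₁ − x₂|^β` for `β ∈ (0,2]` at the
prior `1/2` is `2^{−β}`, attained by the full-information/no-information policy. -/
theorem beta_polarization_bound
    (β : ℝ) (hβ0 : 0 < β) (hβ2 : β ≤ 2) :
    (∀ μl μh : Measure (Fin 2 → BeliefI), FeasibleBin (1 / 2) μl μh →
      (∫ x, |(x 0).1 - (x 1).1| ^ β
          ∂(ENNReal.ofReal (1 / 2) • μl + ENNReal.ofReal (1 / 2) • μh))
        ≤ 2 ^ (-β)) ∧
    (FeasibleBin (1 / 2)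
        (Measure.dirac (fun i : Fin 2 =>
          if i = 0 then (⟨1 / 2, by norm_num⟩ : BeliefI) else ⟨1, by norm_num⟩))
        (Measure.dirac (fun i : Fin 2 =>
          if i = 0 then (⟨1 / 2, by norm_num⟩ : BeliefI) else ⟨0, by norm_num⟩)) ∧
      (∫ x, |(x 0).1 - (x 1).1| ^ β
          ∂(ENNReal.ofReal (1 / 2) •
              (Measure.dirac (fun i : Fin 2 =>
                if i = 0 then (⟨1 / 2, by norm_num⟩ : BeliefI) else ⟨1, by norm_num⟩)) +
            ENNReal.ofReal (1 / 2) •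
              (Measure.dirac (fun i : Fin 2 =>
                if i = 0 then (⟨1 / 2, by norm_num⟩ : BeliefI) else ⟨0, by norm_num⟩))))
        = 2 ^ (-β)) := by
  refine ⟨upper β hβ0 hβ2, feas _ _ ?_, ?_⟩
  · intro i
    fin_cases i
    · left; simp
    · right; simp
  · rw [integral_add_measure, integral_smul_measure, integral_smul_measure, integral_dirac,
      integral_dirac, ENNReal.toReal_ofReal (by norm_num), smul_eq_mul, smul_eq_mul]
    · have e1 : |(1 / 2 : ℝ) - 1| = 2⁻¹ := by norm_num [abs_of_neg]
      have e2 : |(1 / 2 : ℝ) - 0| = 2⁻¹ := by norm_num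
      have e3 : (2⁻¹ : ℝ) ^ β = 2 ^ (-β) := by
        rw [Real.inv_rpow (by norm_num), Real.rpow_neg (by norm_num)]
      simp only [if_true, one_ne_zero, if_false]
      rw [e1, e2, e3]; ring
    · exact (integrable_dirac (by simp)).smul_measure ENNReal.ofReal_ne_top
    · exact (integrable_dirac (by simp)).smul_measure ENNReal.ofReal_ne_top
end
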